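/- arXiv:0910.1207 — 7 statements merged into one kernel-verified Lean document; each statement's English description precedes it below -/
import Mathlib

section
/- Let (X,μ) be a measure space and let f be a μ-measurable function whose distribution function d_{f,μ} is not identically infinite, and whose decreasing rearrangement f* is finite for all t > 0 with sup_{t>0}(f**(t) − f*(t)) ≤ M for some constant M ≥ 0. Then there exists a constant α ≥ 0 (one can take α = lim_{t→∞} f*(t)) such that for all λ > α one has d_{f,μ}(λ) < ∞ and ∫_{{x ∈ X : |f(x)| > λ}} |f| dμ ≤ (λ + M) · d_{f,μ}(λ). -/
open MeasureTheory Set ENNReal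

/-- The distribution function `d_{f,μ}(λ) = μ {x : λ < |f x|}`. -/
noncomputable def distrib {X : Type*} [MeasurableSpace X] (μ : Measure X) (f : X → ℝ)
    (l : ℝ) : ℝ≥0∞ :=
  μ {x | l < |f x|}

/-- The decreasing rearrangement `f*(t) = inf {λ : d_{f,μ}(λ) ≤ t}` (with `inf ∅ = ∞`). -/
noncomputable def rearr {X : Type*} [MeasurableSpace X] (μ : Measure X) (f : X → ℝ)
    (t : ℝ) : ℝ≥0∞ :=
  sInf {l : ℝ≥0∞ | μ {x | l < ENNReal.ofReal |f x|} ≤ ENNReal.ofReal t}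

/-- The maximal function `f**(t) = (1/t) ∫₀ᵗ f*(s) ds`. -/
noncomputable def maxfn {X : Type*} [MeasurableSpace X] (μ : Measure X) (f : X → ℝ)
    (t : ℝ) : ℝ≥0∞ :=
  (∫⁻ s in Set.Ioc (0 : ℝ) t, rearr μ f s) / ENNReal.ofReal t

/-!
The rearrangement `f*` is the generalized inverse of the distribution function: `f*(t) ≤ λ` if and
only if `d(λ) ≤ t`. Comparing layer-cake formulas therefore gives `∫_A |f| dμ ≤ t f**(t)` whenever
`μ A ≤ t`. For `λ > lim f*` the value `t = d(λ)` is finite and `f*(t) ≤ λ`, so `f**(t) ≤ λ + M`;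
now take `A = {|f| > λ}`.
-/

open Filter Topology

theorem lintegral_eq_lintegral_meas_ofReal_lt {Y : Type*} [MeasurableSpace Y] {ν : Measure Y}
    {g : Y → ℝ≥0∞} (hg : AEMeasurable g ν) :
    ∫⁻ y, g y ∂ν = ∫⁻ r in Ioi (0 : ℝ), ν {y | ENNReal.ofReal r < g y} := by
  by_cases hfin : ∀ᵐ y ∂ν, g y ≠ ⊤
  · have hreal : g =ᵐ[ν] fun y => ENNReal.ofReal (g y).toReal := by
      filter_upwards [hfin] with y hy using (ofReal_toReal hy).symm
    rw [lintegral_congr_ae hreal, lintegral_eq_lintegral_meas_lt ν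
      (Eventually.of_forall fun _ => toReal_nonneg) hg.ennreal_toReal]
    refine setLIntegral_congr_fun measurableSet_Ioi fun r hr => measure_congr ?_
    filter_upwards [hfin] with y hy
    exact propext (ofReal_lt_iff_lt_toReal (le_of_lt hr) hy).symm
  · have hpos : ν {y | g y = ⊤} ≠ 0 := by simpa only [ae_iff, not_not] using hfin
    have htop : ∫⁻ _ in Ioi (0 : ℝ), ν {y | g y = ⊤} = ⊤ := by
      rw [setLIntegral_const, Real.volume_Ioi, mul_top hpos]
    rw [lintegral_eq_top_of_measure_eq_top_ne_zero hg hpos, eq_comm, eq_top_iff, ← htop]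
    exact lintegral_mono fun r => measure_mono fun y hy =>
      ofReal_lt_top.trans_eq (Eq.symm hy)

section Rearrangement

variable {X : Type*} [MeasurableSpace X] {μ : Measure X} {f : X → ℝ} {l t : ℝ}

theorem rearr_antitone : Antitone (rearr μ f) := fun _ _ hst =>
  sInf_le_sInf fun _ hl => le_trans hl (ofReal_le_ofReal hst)

theorem rearr_le_iff {a : ℝ≥0∞} :
    rearr μ f t ≤ a ↔ μ {x | a < ENNReal.ofReal |f x|} ≤ ENNReal.ofReal t := by
  refine ⟨fun h => ?_, fun h => sInf_le h⟩
  rcases eq_top_or_lt_top a with rfl | ha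
  · simp
  obtain ⟨u, hu_anti, hu_mem, hu_lim⟩ := exists_seq_strictAnti_tendsto' ha
  have hunion : {x | a < ENNReal.ofReal |f x|} = ⋃ n, {x | u n < ENNReal.ofReal |f x|} := by
    ext x
    simp only [mem_ofPred_eq, mem_iUnion]
    exact ⟨fun hx => (hu_lim.eventually_lt_const hx).exists, fun ⟨n, hn⟩ => (hu_mem n).1.trans hn⟩
  have hmono : Monotone fun n => {x | u n < ENNReal.ofReal |f x|} := fun _ _ hmn _ hx =>
    (hu_anti.antitone hmn).trans_lt hx
  rw [hunion, hmono.measure_iUnion]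
  refine iSup_le fun n => ?_
  obtain ⟨b, hb, hbu⟩ := sInf_lt_iff.1 (h.trans_lt (hu_mem n).1)
  exact (measure_mono fun _ hx => hbu.trans hx).trans hb

theorem rearr_le_ofReal_iff (hl : 0 ≤ l) :
    rearr μ f t ≤ ENNReal.ofReal l ↔ distrib μ f l ≤ ENNReal.ofReal t := by
  simp only [rearr_le_iff, distrib, ofReal_lt_ofReal_iff_of_nonneg hl]

theorem setLIntegral_le_lintegral_rearr (hf : AEMeasurable f μ) {A : Set X}
    (hA : μ A ≤ ENNReal.ofReal t) :
    ∫⁻ x in A, ENNReal.ofReal |f x| ∂μ ≤ ∫⁻ s in Ioc 0 t, rearr μ f s := by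
  have habs : AEMeasurable (fun x => |f x|) (μ.restrict A) :=
    (measurable_norm.comp_aemeasurable hf).restrict
  rw [lintegral_eq_lintegral_meas_lt _ (Eventually.of_forall fun x => abs_nonneg (f x)) habs,
    lintegral_eq_lintegral_meas_ofReal_lt rearr_antitone.measurable.aemeasurable]
  refine setLIntegral_mono' measurableSet_Ioi fun r hr => ?_
  set m := μ.restrict A {x | r < |f x|}
  have hm_distrib : m ≤ distrib μ f r := Measure.restrict_le_self _
  have hm_le : m ≤ ENNReal.ofReal t :=
    (measure_mono (subset_univ _)).trans (Measure.restrict_apply_univ A ▸ hA)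
  have hm_top : m ≠ ⊤ := ne_top_of_le_ne_top ofReal_ne_top hm_le
  have hsub : Ioo 0 m.toReal ⊆ {s | ENNReal.ofReal r < rearr μ f s} ∩ Ioc 0 t := by
    intro s hs
    have hsm : ENNReal.ofReal s < m := (ofReal_lt_iff_lt_toReal hs.1.le hm_top).2 hs.2
    refine ⟨?_, hs.1, ?_⟩
    · exact lt_of_not_ge <|
        (rearr_le_ofReal_iff (le_of_lt hr)).not.2 (hsm.trans_le hm_distrib).not_ge
    · exact ((ofReal_lt_ofReal_iff_of_nonneg hs.1.le).1 (hsm.trans_le hm_le)).le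
  calc m = volume (Ioo 0 m.toReal) := by rw [Real.volume_Ioo, sub_zero, ofReal_toReal hm_top]
    _ ≤ volume ({s | ENNReal.ofReal r < rearr μ f s} ∩ Ioc 0 t) := measure_mono hsub
    _ ≤ volume.restrict (Ioc 0 t) {s | ENNReal.ofReal r < rearr μ f s} :=
      Measure.le_restrict_apply _ _

theorem setLIntegral_le_maxfn_mul (hf : AEMeasurable f μ) (ht : 0 < t) {A : Set X}
    (hA : μ A ≤ ENNReal.ofReal t) :
    ∫⁻ x in A, ENNReal.ofReal |f x| ∂μ ≤ maxfn μ f t * ENNReal.ofReal t := by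
  rw [maxfn, ENNReal.div_mul_cancel (ofReal_pos.2 ht).ne' ofReal_ne_top]
  exact setLIntegral_le_lintegral_rearr hf hA

theorem setLIntegral_superlevel_le_add_mul_distrib (hf : AEMeasurable f μ) {M : ℝ≥0∞}
    (hsub : ∀ t : ℝ, 0 < t → maxfn μ f t - rearr μ f t ≤ M)
    (hl : 0 ≤ l) (hd : distrib μ f l ≠ ⊤) :
    ∫⁻ x in {x | l < |f x|}, ENNReal.ofReal |f x| ∂μ ≤
      (ENNReal.ofReal l + M) * distrib μ f l := by
  rcases eq_or_ne (distrib μ f l) 0 with h0 | h0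
  · exact (setLIntegral_measure_zero _ _ h0).trans_le zero_le
  set t := (distrib μ f l).toReal
  have ht : 0 < t := toReal_pos h0 hd
  have htd : ENNReal.ofReal t = distrib μ f l := ofReal_toReal hd
  have hrearr : rearr μ f t ≤ ENNReal.ofReal l := (rearr_le_ofReal_iff hl).2 htd.ge
  calc ∫⁻ x in {x | l < |f x|}, ENNReal.ofReal |f x| ∂μ
      ≤ maxfn μ f t * ENNReal.ofReal t := setLIntegral_le_maxfn_mul hf ht htd.ge
    _ ≤ (rearr μ f t + M) * ENNReal.ofReal t := by gcongr; exact tsub_le_iff_left.1 (hsub t ht)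
    _ ≤ (ENNReal.ofReal l + M) * distrib μ f l := by rw [htd]; gcongr

theorem exists_tendsto_rearr (hnotinf : ∃ l : ℝ, 0 ≤ l ∧ distrib μ f l ≠ ⊤) :
    ∃ α : ℝ, 0 ≤ α ∧ Tendsto (rearr μ f) atTop (𝓝 (ENNReal.ofReal α)) := by
  obtain ⟨l, hl, hd⟩ := hnotinf
  have hinf : ⨅ t, rearr μ f t ≠ ⊤ := ne_top_of_le_ne_top ofReal_ne_top <|
    (iInf_le _ _).trans ((rearr_le_ofReal_iff hl).2 (ofReal_toReal hd).ge)
  refine ⟨(⨅ t, rearr μ f t).toReal, toReal_nonneg, ?_⟩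
  rw [ofReal_toReal hinf]
  exact tendsto_atTop_iInf rearr_antitone

theorem distrib_lt_top_of_tendsto_rearr {α : ℝ≥0∞} (hα : Tendsto (rearr μ f) atTop (𝓝 α))
    (hl : α < ENNReal.ofReal l) : distrib μ f l < ⊤ := by
  obtain ⟨t, ht⟩ := (hα.eventually_lt_const hl).exists
  have hl_pos : 0 < l := ofReal_pos.1 (pos_of_gt hl)
  exact ((rearr_le_ofReal_iff hl_pos.le).1 ht.le).trans_lt ofReal_lt_top

end Rearrangement

theorem stmt0_general {X : Type*} [MeasurableSpace X] {μ : Measure X} {f : X → ℝ}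
    (hf : AEMeasurable f μ)
    (hnotinf : ∃ l : ℝ, 0 ≤ l ∧ distrib μ f l ≠ ⊤)
    {M : ℝ} (hM : 0 ≤ M)
    (hsub : ∀ t : ℝ, 0 < t → maxfn μ f t - rearr μ f t ≤ ENNReal.ofReal M) :
    ∃ α : ℝ, 0 ≤ α ∧ Tendsto (rearr μ f) atTop (𝓝 (ENNReal.ofReal α)) ∧ ∀ l : ℝ, α < l →
      distrib μ f l < ⊤ ∧
      ∫⁻ x in {x | l < |f x|}, ENNReal.ofReal |f x| ∂μ ≤
        ENNReal.ofReal (l + M) * distrib μ f l := by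
  obtain ⟨α, hα, hlim⟩ := exists_tendsto_rearr hnotinf
  refine ⟨α, hα, hlim, fun l hl => ?_⟩
  have hl_nonneg : 0 ≤ l := hα.trans hl.le
  have hd : distrib μ f l < ⊤ :=
    distrib_lt_top_of_tendsto_rearr hlim ((ofReal_lt_ofReal_iff_of_nonneg hα).2 hl)
  refine ⟨hd, ?_⟩
  rw [ofReal_add hl_nonneg hM]
  exact setLIntegral_superlevel_le_add_mul_distrib hf hsub hl_nonneg hd.ne

/-- if `f* < ∞` everywhere and `f** - f* ≤ M`, then there is `α ≥ 0`
(one can take `α = lim_{t→∞} f*(t)`) such that for all `λ > α` the distribution function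
is finite and `∫_{|f|>λ} |f| dμ ≤ (λ + M) d_{f,μ}(λ)`. -/
theorem stmt0 {X : Type*} [MeasurableSpace X] (μ : Measure X) (f : X → ℝ)
    (hf : Measurable f)
    (hnotinf : ∃ l : ℝ, 0 ≤ l ∧ distrib μ f l ≠ ⊤)
    (M : ℝ) (hM : 0 ≤ M)
    (hfin : ∀ t : ℝ, 0 < t → rearr μ f t ≠ ⊤)
    (hsub : ∀ t : ℝ, 0 < t → maxfn μ f t - rearr μ f t ≤ ENNReal.ofReal M) :
    ∃ α : ℝ, 0 ≤ α ∧ ∀ l : ℝ, α < l →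
      distrib μ f l < ⊤ ∧
      ∫⁻ x in {x | l < |f x|}, ENNReal.ofReal |f x| ∂μ ≤
        ENNReal.ofReal (l + M) * distrib μ f l := by
  obtain ⟨α, hα, -, hbound⟩ := stmt0_general hf.aemeasurable hnotinf hM hsub
  exact ⟨α, hα, hbound⟩
end

section
/- Let g : (α, ∞) → [0, ∞) be a decreasing function (α ≥ 0) and let M > 0 be such that ∫_s^∞ g(t) dt ≤ M · g(s) for every s > α. Then g(s + t) ≤ 4 · e^{−(log 2) t / M} · g(s) for every s > α and every t > 0. -/
open MeasureTheory Set ENNReal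

/-!
Write `G s = ∫_s^∞ f`. Monotonicity gives `M f(s + M) ≤ ∫_s^{s + M} f = G s - G (s + M)`, and the
hypothesis at `s + M` turns the left side into at least `G (s + M)`; so `G` is at least halved on
every step of length `M`. After `n` steps, `2 ^ n * M f(s + (n + 1) M) ≤ 2 ^ n * G (s + n M) ≤ G s
≤ M f(s)`. For general `t`, round down to a multiple of `M`: the first step and the rounding each
lose one factor `2`, whence the constant `4`.
-/

theorem ofReal_sub_mul_le_setLIntegral_Ioc {f : ℝ → ℝ≥0∞} {a b : ℝ}
    (hf : AntitoneOn f (Ioc a b)) :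
    ENNReal.ofReal (b - a) * f b ≤ ∫⁻ x in Ioc a b, f x := by
  calc ENNReal.ofReal (b - a) * f b = ∫⁻ _ in Ioc a b, f b := by
        rw [setLIntegral_const, Real.volume_Ioc, mul_comm]
    _ ≤ ∫⁻ x in Ioc a b, f x := setLIntegral_mono' measurableSet_Ioc fun x hx ↦
        hf hx (right_mem_Ioc.2 (hx.1.trans_le hx.2)) hx.2

theorem ofReal_sub_mul_add_setLIntegral_Ioi_le {f : ℝ → ℝ≥0∞} {a b : ℝ} (hab : a ≤ b)
    (hf : AntitoneOn f (Ioc a b)) :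
    ENNReal.ofReal (b - a) * f b + ∫⁻ x in Ioi b, f x ≤ ∫⁻ x in Ioi a, f x := by
  rw [← Ioc_union_Ioi_eq_Ioi hab, lintegral_union measurableSet_Ioi Ioc_disjoint_Ioi_same]
  gcongr
  exact ofReal_sub_mul_le_setLIntegral_Ioc hf

theorem two_le_two_pow_floor_mul_four_mul_exp (x : ℝ) :
    2 ≤ 2 ^ ⌊x⌋₊ * (4 * Real.exp (-Real.log 2 * x)) := by
  have hexp : Real.exp (-Real.log 2 * x) = (2 : ℝ) ^ (-x) := by
    rw [Real.rpow_def_of_pos two_pos, neg_mul_comm]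
  calc (2 : ℝ) = 2 ^ (1 : ℝ) := (Real.rpow_one 2).symm
    _ ≤ 2 ^ (⌊x⌋₊ + (2 + -x)) :=
        Real.rpow_le_rpow_of_exponent_le one_le_two (by linarith [Nat.lt_floor_add_one x])
    _ = 2 ^ ⌊x⌋₊ * (4 * Real.exp (-Real.log 2 * x)) := by
        rw [hexp, Real.rpow_add two_pos, Real.rpow_add two_pos, Real.rpow_natCast]
        norm_num

section TailBound

variable {S : Set ℝ} {f : ℝ → ℝ≥0∞} {M s : ℝ}

theorem two_mul_setLIntegral_Ioi_add_le (hM : 0 ≤ M) (hf : AntitoneOn f (Ioc s (s + M)))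
    (hint : ∫⁻ x in Ioi (s + M), f x ≤ ENNReal.ofReal M * f (s + M)) :
    2 * ∫⁻ x in Ioi (s + M), f x ≤ ∫⁻ x in Ioi s, f x := by
  calc 2 * ∫⁻ x in Ioi (s + M), f x
      ≤ ENNReal.ofReal M * f (s + M) + ∫⁻ x in Ioi (s + M), f x := by
        rw [two_mul]
        gcongr
    _ ≤ ∫⁻ x in Ioi s, f x := by
        simpa only [add_sub_cancel_left] using
          ofReal_sub_mul_add_setLIntegral_Ioi_le (le_add_of_nonneg_right hM) hf

theorem two_pow_mul_setLIntegral_Ioi_add_le (hS : IsUpperSet S) (hf : AntitoneOn f S)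
    (hM : 0 ≤ M) (hint : ∀ s ∈ S, ∫⁻ x in Ioi s, f x ≤ ENNReal.ofReal M * f s) (hs : s ∈ S)
    (n : ℕ) : 2 ^ n * ∫⁻ x in Ioi (s + n * M), f x ≤ ∫⁻ x in Ioi s, f x := by
  induction n with
  | zero => simp
  | succ n ih =>
    have hn : s + n * M ∈ S := hS (le_add_of_nonneg_right (by positivity)) hs
    have hadd : s + (n + 1 : ℕ) * M = s + n * M + M := by push_cast; ring
    rw [hadd, pow_succ, mul_assoc]
    refine le_trans ?_ ih
    gcongr
    exact two_mul_setLIntegral_Ioi_add_le hM (hf.mono fun x hx ↦ hS hx.1.le hn)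
      (hint _ (hS (le_add_of_nonneg_right hM) hn))

theorem two_pow_mul_apply_add_le (hS : IsUpperSet S) (hf : AntitoneOn f S)
    (hM : 0 < M) (hint : ∀ s ∈ S, ∫⁻ x in Ioi s, f x ≤ ENNReal.ofReal M * f s) (hs : s ∈ S)
    (n : ℕ) : 2 ^ n * f (s + (n + 1) * M) ≤ f s := by
  have hn : s + n * M ∈ S := hS (le_add_of_nonneg_right (by positivity)) hs
  have hadd : s + (n + 1) * M = s + n * M + M := by ring
  have hstep : ENNReal.ofReal M * f (s + (n + 1) * M) ≤ ∫⁻ x in Ioi (s + n * M), f x := by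
    rw [hadd]
    simpa only [add_sub_cancel_left] using le_self_add.trans
      (ofReal_sub_mul_add_setLIntegral_Ioi_le (le_add_of_nonneg_right hM.le)
        (hf.mono fun x hx ↦ hS hx.1.le hn))
  refine (ENNReal.mul_le_mul_iff_right (ofReal_pos.2 hM).ne' ofReal_ne_top).1 ?_
  calc ENNReal.ofReal M * (2 ^ n * f (s + (n + 1) * M))
      = 2 ^ n * (ENNReal.ofReal M * f (s + (n + 1) * M)) := mul_left_comm _ _ _
    _ ≤ 2 ^ n * ∫⁻ x in Ioi (s + n * M), f x := by gcongr
    _ ≤ ∫⁻ x in Ioi s, f x := two_pow_mul_setLIntegral_Ioi_add_le hS hf hM.le hint hs n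
    _ ≤ ENNReal.ofReal M * f s := hint s hs

theorem two_pow_mul_apply_add_le_two_mul (hS : IsUpperSet S) (hf : AntitoneOn f S)
    (hM : 0 < M) (hint : ∀ s ∈ S, ∫⁻ x in Ioi s, f x ≤ ENNReal.ofReal M * f s) (hs : s ∈ S)
    (n : ℕ) : 2 ^ n * f (s + n * M) ≤ 2 * f s := by
  cases n with
  | zero => simpa using le_mul_of_one_le_left' (a := f s) one_le_two
  | succ n =>
    rw [pow_succ', mul_assoc, Nat.cast_succ]
    gcongr
    exact two_pow_mul_apply_add_le hS hf hM hint hs n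

theorem stmt3_general (hS : IsUpperSet S) (hf : AntitoneOn f S) (hM : 0 < M)
    (hint : ∀ s ∈ S, ∫⁻ x in Ioi s, f x ≤ ENNReal.ofReal M * f s) (hs : s ∈ S)
    {t : ℝ} (ht : 0 ≤ t) :
    f (s + t) ≤ ENNReal.ofReal (4 * Real.exp (-(Real.log 2) * t / M)) * f s := by
  set n := ⌊t / M⌋₊ with hn
  set c := 4 * Real.exp (-(Real.log 2) * t / M) with hc
  have hround : s + n * M ≤ s + t := by
    gcongr
    exact (le_div_iff₀ hM).1 (Nat.floor_le (by positivity))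
  have hconst : (2 : ℝ≥0∞) ≤ 2 ^ n * ENNReal.ofReal c := by
    have h := ENNReal.ofReal_le_ofReal (two_le_two_pow_floor_mul_four_mul_exp (t / M))
    rwa [← mul_div_assoc, ← hn, ← hc, ENNReal.ofReal_mul (by positivity),
      ENNReal.ofReal_pow zero_le_two, ENNReal.ofReal_ofNat] at h
  have hmem : s + n * M ∈ S := hS (le_add_of_nonneg_right (by positivity)) hs
  refine (ENNReal.mul_le_mul_iff_right (a := 2 ^ n) (by simp) (by simp)).1 ?_
  calc 2 ^ n * f (s + t) ≤ 2 ^ n * f (s + n * M) := by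
        gcongr
        exact hf hmem (hS hround hmem) hround
    _ ≤ 2 * f s := two_pow_mul_apply_add_le_two_mul hS hf hM hint hs n
    _ ≤ 2 ^ n * ENNReal.ofReal c * f s := by gcongr
    _ = 2 ^ n * (ENNReal.ofReal c * f s) := mul_assoc _ _ _

end TailBound

/-- if `g : (α,∞) → [0,∞)` is decreasing and `∫_s^∞ g(t) dt ≤ M g(s)` for all
`s > α`, then `g(s + t) ≤ 4 e^{-(log 2) t / M} g(s)` for all `s > α`, `t > 0`. -/
theorem stmt3 (α : ℝ) (hα : 0 ≤ α) (g : ℝ → ℝ)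
    (hg_nonneg : ∀ s : ℝ, α < s → 0 ≤ g s)
    (hg_dec : ∀ s t : ℝ, α < s → s ≤ t → g t ≤ g s)
    (M : ℝ) (hM : 0 < M)
    (hint : ∀ s : ℝ, α < s →
      ∫⁻ t in Set.Ioi s, ENNReal.ofReal (g t) ≤ ENNReal.ofReal (M * g s)) :
    ∀ s t : ℝ, α < s → 0 < t →
      g (s + t) ≤ 4 * Real.exp (-(Real.log 2) * t / M) * g s := by
  intro s t hs ht
  rw [← ofReal_le_ofReal_iff (mul_nonneg (by positivity) (hg_nonneg s hs)),
    ofReal_mul (by positivity)]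
  exact stmt3_general (f := fun x ↦ ENNReal.ofReal (g x)) (isUpperSet_Ioi α)
    (fun x hx y _ hxy ↦ ofReal_le_ofReal (hg_dec x y hx hxy)) hM
    (fun x hx ↦ (hint x hx).trans_eq (ofReal_mul hM.le)) hs ht.le
end

section
/- Let (X,μ) be a measure space and let f be a μ-measurable function. Suppose there exist constants c₁, c₂ > 0 such that d_{f,μ}(λ₂) ≤ c₁ · d_{f,μ}(λ₁) · e^{c₂(λ₁ − λ₂)} for all λ₂ > λ₁ ≥ 0 and that d_{f,μ} is not identically infinite. Then there exists α ≥ 0 such that for all λ > α one has d_{f,μ}(λ) < ∞ and ∫_{{x ∈ X : |f(x)| > λ}} |f| dμ ≤ (λ + c₁/c₂) · d_{f,μ}(λ). -/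
open MeasureTheory Set ENNReal

/-!
Pointwise `|f| ≤ l + (|f| - l)⁺`, so by the layer cake formula the integral of `|f|` over
`{|f| > l}` is at most `l d(l) + ∫ₗ^∞ d(t) dt`, where `d` is the distribution function of `f`.
Taking `λ₁ = l` in the decay hypothesis, the tail is at most
`c₁ d(l) ∫ₗ^∞ e^{c₂ (l - t)} dt = (c₁ / c₂) d(l)`.
-/

section LayerCake

variable {X : Type*} [MeasurableSpace X]

theorem lintegral_ofReal_le_lintegral_meas_lt (μ : Measure X) (f : X → ℝ) :
    ∫⁻ x, ENNReal.ofReal (f x) ∂μ ≤ ∫⁻ t in Ioi (0 : ℝ), μ {x | t < f x} := by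
  -- A measurable minorant with the same integral reduces to the measurable layer cake formula;
  -- only an inequality survives, because the superlevel sets of `f` may be larger.
  obtain ⟨g, hg, hgf, hint⟩ :=
    exists_measurable_le_lintegral_eq μ fun x ↦ ENNReal.ofReal (f x)
  have hg_ofReal (x : X) : ENNReal.ofReal (g x).toReal = g x :=
    ENNReal.ofReal_toReal ((hgf x).trans_lt ENNReal.ofReal_lt_top).ne
  calc ∫⁻ x, ENNReal.ofReal (f x) ∂μ
      = ∫⁻ x, ENNReal.ofReal (g x).toReal ∂μ := by simp_rw [hint, hg_ofReal]
    _ = ∫⁻ t in Ioi (0 : ℝ), μ {x | t < (g x).toReal} :=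
        lintegral_eq_lintegral_meas_lt μ (.of_forall fun _ ↦ ENNReal.toReal_nonneg)
          hg.ennreal_toReal.aemeasurable
    _ ≤ ∫⁻ t in Ioi (0 : ℝ), μ {x | t < f x} := by
        refine setLIntegral_mono' measurableSet_Ioi fun t ht ↦ measure_mono fun x hx ↦ ?_
        have hx' : ENNReal.ofReal t < ENNReal.ofReal (f x) :=
          ((ENNReal.ofReal_lt_iff_lt_toReal (mem_Ioi.1 ht).le
            (hg_ofReal x ▸ ENNReal.ofReal_ne_top)).2 hx).trans_le (hgf x)
        exact (ENNReal.ofReal_lt_ofReal_iff'.1 hx').1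

theorem lintegral_ofReal_sub_le_lintegral_meas_lt (μ : Measure X) (f : X → ℝ) (a : ℝ) :
    ∫⁻ x, ENNReal.ofReal (f x - a) ∂μ ≤ ∫⁻ t in Ioi a, μ {x | t < f x} := by
  have hshift : ∫⁻ t in Ioi (0 : ℝ), μ {x | t + a < f x} = ∫⁻ t in Ioi a, μ {x | t < f x} := by
    have := (measurePreserving_add_right volume a).setLIntegral_comp_preimage_emb
      (measurableEmbedding_addRight a) (fun t ↦ μ {x | t < f x}) (Ioi a)
    simpa using this
  simpa only [lt_sub_iff_add_lt, hshift] using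
    lintegral_ofReal_le_lintegral_meas_lt μ fun x ↦ f x - a

end LayerCake

theorem lintegral_exp_mul_sub_Ioi {c : ℝ} (hc : 0 < c) (a : ℝ) :
    ∫⁻ t in Ioi a, ENNReal.ofReal (Real.exp (c * (a - t))) = ENNReal.ofReal c⁻¹ := by
  have hexp (t : ℝ) : Real.exp (c * (a - t)) = Real.exp (c * a) * Real.exp (-c * t) := by
    rw [← Real.exp_add]; ring_nf
  have hint := (integrableOn_exp_mul_Ioi (neg_lt_zero.2 hc) a).const_mul (Real.exp (c * a))
  simp_rw [hexp]
  rw [← ofReal_integral_eq_lintegral_ofReal hint (.of_forall fun t ↦ by positivity),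
    integral_const_mul, integral_exp_mul_Ioi (neg_lt_zero.2 hc), neg_div_neg_eq, mul_div_assoc',
    ← Real.exp_add, neg_mul, add_neg_cancel, Real.exp_zero, one_div]

section Distrib

variable {X : Type*} [MeasurableSpace X] (μ : Measure X) (f : X → ℝ)

theorem distrib_antitone : Antitone (distrib μ f) :=
  fun _ _ hab ↦ measure_mono fun _ hx ↦ hab.trans_lt hx

theorem setLIntegral_abs_le_distrib_add_lintegral_distrib (l : ℝ) :
    ∫⁻ x in {x | l < |f x|}, ENNReal.ofReal |f x| ∂μ ≤
      ENNReal.ofReal l * distrib μ f l + ∫⁻ t in Ioi l, distrib μ f t :=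
  calc ∫⁻ x in {x | l < |f x|}, ENNReal.ofReal |f x| ∂μ
      ≤ ∫⁻ x in {x | l < |f x|}, (ENNReal.ofReal l + ENNReal.ofReal (|f x| - l)) ∂μ :=
        lintegral_mono fun x ↦ by
          simpa only [add_sub_cancel] using ENNReal.ofReal_add_le (p := l) (q := |f x| - l)
    _ = ENNReal.ofReal l * distrib μ f l +
          ∫⁻ x in {x | l < |f x|}, ENNReal.ofReal (|f x| - l) ∂μ := by
        rw [lintegral_add_left measurable_const, setLIntegral_const, distrib]
    _ ≤ ENNReal.ofReal l * distrib μ f l + ∫⁻ t in Ioi l, distrib μ f t := by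
        gcongr
        exact (setLIntegral_le_lintegral _ _).trans
          (lintegral_ofReal_sub_le_lintegral_meas_lt μ (fun x ↦ |f x|) l)

variable {μ f}

theorem lintegral_distrib_Ioi_le_of_exp_decay {c₁ c₂ l : ℝ} (hc₂ : 0 < c₂)
    (hdecay : ∀ t, l < t →
      distrib μ f t ≤ ENNReal.ofReal (c₁ * Real.exp (c₂ * (l - t))) * distrib μ f l) :
    ∫⁻ t in Ioi l, distrib μ f t ≤ ENNReal.ofReal (c₁ / c₂) * distrib μ f l :=
  calc ∫⁻ t in Ioi l, distrib μ f t
      ≤ ∫⁻ t in Ioi l, ENNReal.ofReal (c₁ * Real.exp (c₂ * (l - t))) * distrib μ f l :=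
        setLIntegral_mono' measurableSet_Ioi hdecay
    _ = ENNReal.ofReal c₁ * (∫⁻ t in Ioi l, ENNReal.ofReal (Real.exp (c₂ * (l - t)))) *
          distrib μ f l := by
        simp_rw [ENNReal.ofReal_mul' (Real.exp_nonneg _)]
        rw [lintegral_mul_const _ (by fun_prop), lintegral_const_mul _ (by fun_prop)]
    _ = ENNReal.ofReal (c₁ / c₂) * distrib μ f l := by
        rw [lintegral_exp_mul_sub_Ioi hc₂, ← ENNReal.ofReal_mul' (inv_nonneg.2 hc₂.le),
          ← div_eq_mul_inv]

end Distrib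

theorem stmt5_general {X : Type*} [MeasurableSpace X] (μ : Measure X) (f : X → ℝ)
    (c₁ c₂ : ℝ) (hc₁ : 0 < c₁) (hc₂ : 0 < c₂)
    (h : ∀ l₁ l₂ : ℝ, 0 ≤ l₁ → l₁ < l₂ →
      distrib μ f l₂ ≤ ENNReal.ofReal (c₁ * Real.exp (c₂ * (l₁ - l₂))) * distrib μ f l₁)
    (hnotinf : ∃ l : ℝ, 0 ≤ l ∧ distrib μ f l ≠ ⊤) :
    ∃ α : ℝ, 0 ≤ α ∧ ∀ l : ℝ, α < l →
      distrib μ f l < ⊤ ∧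
      ∫⁻ x in {x | l < |f x|}, ENNReal.ofReal |f x| ∂μ ≤
        ENNReal.ofReal (l + c₁ / c₂) * distrib μ f l := by
  obtain ⟨a, ha, hfin⟩ := hnotinf
  refine ⟨a, ha, fun l hal ↦ ⟨(distrib_antitone μ f hal.le).trans_lt hfin.lt_top, ?_⟩⟩
  have hl : 0 ≤ l := ha.trans hal.le
  calc ∫⁻ x in {x | l < |f x|}, ENNReal.ofReal |f x| ∂μ
      ≤ ENNReal.ofReal l * distrib μ f l + ∫⁻ t in Ioi l, distrib μ f t :=
        setLIntegral_abs_le_distrib_add_lintegral_distrib μ f l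
    _ ≤ ENNReal.ofReal l * distrib μ f l + ENNReal.ofReal (c₁ / c₂) * distrib μ f l := by
        gcongr
        exact lintegral_distrib_Ioi_le_of_exp_decay hc₂ fun t ↦ h l t hl
    _ = ENNReal.ofReal (l + c₁ / c₂) * distrib μ f l := by
        rw [ENNReal.ofReal_add hl (by positivity), add_mul]

/-- if `d_{f,μ}(λ₂) ≤ c₁ d_{f,μ}(λ₁) e^{c₂ (λ₁ - λ₂)}` for all `λ₂ > λ₁ ≥ 0`
and `d_{f,μ}` is not identically infinite, then there is `α ≥ 0` so that for all `λ > α`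
the distribution function is finite and
`∫_{|f|>λ} |f| dμ ≤ (λ + c₁/c₂) d_{f,μ}(λ)`. -/
theorem stmt5 {X : Type*} [MeasurableSpace X] (μ : Measure X) (f : X → ℝ)
    (hf : Measurable f)
    (c₁ c₂ : ℝ) (hc₁ : 0 < c₁) (hc₂ : 0 < c₂)
    (h : ∀ l₁ l₂ : ℝ, 0 ≤ l₁ → l₁ < l₂ →
      distrib μ f l₂ ≤ ENNReal.ofReal (c₁ * Real.exp (c₂ * (l₁ - l₂))) * distrib μ f l₁)
    (hnotinf : ∃ l : ℝ, 0 ≤ l ∧ distrib μ f l ≠ ⊤) :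
    ∃ α : ℝ, 0 ≤ α ∧ ∀ l : ℝ, α < l →
      distrib μ f l < ⊤ ∧
      ∫⁻ x in {x | l < |f x|}, ENNReal.ofReal |f x| ∂μ ≤
        ENNReal.ofReal (l + c₁ / c₂) * distrib μ f l :=
  stmt5_general μ f c₁ c₂ hc₁ hc₂ h hnotinf
end

section
/- Let (X,d,μ) be a metric measure space and let f ∈ L¹_loc(X). Suppose there exists M ≥ 0 such that for all λ ≥ 0 and all balls B ⊂ X, ∫_{{x ∈ B : |f(x) − f_B| > λ}} |f − f_B| dμ ≤ (λ + M) · μ({x ∈ B : |f(x) − f_B| > λ}). Then there exist constants c₁, c₂ > 0 such that μ({x ∈ B : |f(x) − f_B| > λ₂}) ≤ c₁ · μ({x ∈ B : |f(x) − f_B| > λ₁}) · e^{c₂(λ₂ − λ₁)·(−1)} — that is, ≤ c₁ μ({|f − f_B| > λ₁}) e^{c₂(λ₁ − λ₂)} — for all 0 ≤ λ₁ < λ₂ and all balls B ⊂ X (one may take c₁ = 4 and c₂ = (log 2)/M). -/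
open MeasureTheory Metric Set ENNReal

/-- The mean value `f_B = ⨍_B f dμ` of `f` over a set `B`. -/
noncomputable def meanOn {X : Type*} [MeasurableSpace X] (μ : Measure X) (f : X → ℝ)
    (B : Set X) : ℝ :=
  ⨍ y in B, f y ∂μ

/-!
For a real function `g` write `φ l = μ {g > l}` and `Φ l = ∫ (g - l)⁺ dμ`. Subtracting `l * φ l`
from the tail condition `∫_{g > l} g dμ ≤ (l + M) φ l` leaves `Φ l ≤ M φ l`, while the pointwise
inequality `(g - l)⁺ ≥ (g - (l + M))⁺ + M 1_{g > l + M}` integrates to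
`Φ l ≥ Φ (l + M) + M φ (l + M)`. Together they give `Φ l ≥ 2 Φ (l + M)`, so `Φ` is at least
halved by each step of length `M`, and `φ` inherits the geometric decay because
`M φ (l + M) ≤ Φ l ≤ M φ l`. Halving once per length `M` is the rate `(log 2) / M`; the passage
between `φ` and `Φ` and the rounding of `(t - l) / M` to an integer each cost one step, whence the
factor `4`.
-/

/-- The bounded mean tail condition for a single function `g`: above every level `l ≥ 0`, the mean
of `g` over `{g > l}` is at most `l + M`. Bounded mean tail oscillation of `f` is this condition
for `|f - f_B|` and the restriction of the measure to `B`, with one `M` for all balls `B`. The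
inequality is multiplied out, so that it makes sense when `{g > l}` has measure zero or infinity. -/
def MeanTailBound {X : Type*} [MeasurableSpace X] (μ : Measure X) (g : X → ℝ) (M : ℝ) : Prop :=
  ∀ l : ℝ, 0 ≤ l →
    ∫⁻ y in {y | l < g y}, ENNReal.ofReal (g y) ∂μ ≤ ENNReal.ofReal (l + M) * μ {y | l < g y}

theorem two_le_two_pow_floor_mul_exp (s : ℝ) :
    2 ≤ 2 ^ ⌊s⌋₊ * (4 * Real.exp (-(Real.log 2 * s))) := by
  have hfloor : Real.exp (Real.log 2 * s) ≤ 2 ^ (⌊s⌋₊ + 1) := by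
    rw [← Real.rpow_def_of_pos two_pos, ← Real.rpow_natCast, Nat.cast_succ]
    exact Real.rpow_le_rpow_of_exponent_le one_le_two (Nat.lt_floor_add_one s).le
  rw [Real.exp_neg, ← mul_assoc, ← div_eq_mul_inv, le_div_iff₀ (Real.exp_pos _)]
  linarith [pow_succ (2 : ℝ) ⌊s⌋₊]

section

variable {X : Type*} [MeasurableSpace X] {μ : Measure X} {g : X → ℝ} {l s t M : ℝ}

theorem lintegral_excess_add_mul_measure_tail_le (hg : AEMeasurable g μ) (hs : 0 ≤ s) :
    ∫⁻ y, ENNReal.ofReal (g y - (l + s)) ∂μ + ENNReal.ofReal s * μ {y | l + s < g y} ≤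
      ∫⁻ y, ENNReal.ofReal (g y - l) ∂μ := by
  have htail : NullMeasurableSet {y | l + s < g y} μ := nullMeasurableSet_lt aemeasurable_const hg
  rw [← lintegral_indicator_const₀ htail, ← lintegral_add_left' (hg.sub_const _).ennreal_ofReal]
  refine lintegral_mono fun y => ?_
  by_cases hy : l + s < g y
  · rw [indicator_of_mem (show y ∈ {y | l + s < g y} from hy),
      ← ENNReal.ofReal_add (by linarith) hs]
    exact ENNReal.ofReal_le_ofReal (by linarith)
  · rw [indicator_of_notMem (show y ∉ {y | l + s < g y} from hy), add_zero]
    exact ENNReal.ofReal_le_ofReal (by linarith)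

theorem setLIntegral_tail_eq_add_lintegral_excess (hg : AEMeasurable g μ) (hl : 0 ≤ l) :
    ∫⁻ y in {y | l < g y}, ENNReal.ofReal (g y) ∂μ =
      ENNReal.ofReal l * μ {y | l < g y} + ∫⁻ y, ENNReal.ofReal (g y - l) ∂μ := by
  have htail : NullMeasurableSet {y | l < g y} μ := nullMeasurableSet_lt aemeasurable_const hg
  have hsupport : (Function.support fun y => ENNReal.ofReal (g y - l)) ⊆ {y | l < g y} :=
    fun y hy => sub_pos.1 (ENNReal.ofReal_pos.1 (pos_iff_ne_zero.2 hy))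
  calc ∫⁻ y in {y | l < g y}, ENNReal.ofReal (g y) ∂μ
      = ∫⁻ y in {y | l < g y}, (ENNReal.ofReal l + ENNReal.ofReal (g y - l)) ∂μ := by
        refine lintegral_congr_ae ((ae_restrict_mem₀ htail).mono fun y (hy : l < g y) => ?_)
        dsimp only
        rw [← ENNReal.ofReal_add hl (sub_nonneg.2 hy.le), add_sub_cancel]
    _ = ENNReal.ofReal l * μ {y | l < g y} + ∫⁻ y, ENNReal.ofReal (g y - l) ∂μ := by
        rw [lintegral_add_left measurable_const, setLIntegral_const,
          setLIntegral_eq_of_support_subset hsupport]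

namespace MeanTailBound

theorem lintegral_excess_le (h : MeanTailBound μ g M) (hg : AEMeasurable g μ) (hl : 0 ≤ l)
    (hfin : μ {y | l < g y} ≠ ⊤) :
    ∫⁻ y, ENNReal.ofReal (g y - l) ∂μ ≤ ENNReal.ofReal M * μ {y | l < g y} := by
  refine (ENNReal.add_le_add_iff_left
    (ENNReal.mul_ne_top (a := ENNReal.ofReal l) ENNReal.ofReal_ne_top hfin)).1 ?_
  calc ENNReal.ofReal l * μ {y | l < g y} + ∫⁻ y, ENNReal.ofReal (g y - l) ∂μ
      = ∫⁻ y in {y | l < g y}, ENNReal.ofReal (g y) ∂μ :=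
        (setLIntegral_tail_eq_add_lintegral_excess hg hl).symm
    _ ≤ ENNReal.ofReal (l + M) * μ {y | l < g y} := h l hl
    _ ≤ ENNReal.ofReal l * μ {y | l < g y} + ENNReal.ofReal M * μ {y | l < g y} := by
        rw [← add_mul]
        gcongr
        exact ENNReal.ofReal_add_le

theorem two_mul_lintegral_excess_add_le (h : MeanTailBound μ g M) (hg : AEMeasurable g μ)
    (hM : 0 ≤ M) (hl : 0 ≤ l) (hfin : μ {y | l < g y} ≠ ⊤) :
    2 * ∫⁻ y, ENNReal.ofReal (g y - (l + M)) ∂μ ≤ ∫⁻ y, ENNReal.ofReal (g y - l) ∂μ := by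
  have hfin' : μ {y | l + M < g y} ≠ ⊤ :=
    measure_ne_top_of_subset (fun y (hy : l + M < g y) => (by linarith : l < g y)) hfin
  rw [two_mul]
  exact (add_le_add_right (h.lintegral_excess_le hg (add_nonneg hl hM) hfin') _).trans
    (lintegral_excess_add_mul_measure_tail_le hg hM)

theorem two_pow_mul_lintegral_excess_le (h : MeanTailBound μ g M) (hg : AEMeasurable g μ)
    (hM : 0 ≤ M) (hl : 0 ≤ l) (hfin : μ {y | l < g y} ≠ ⊤) (n : ℕ) :
    2 ^ n * ∫⁻ y, ENNReal.ofReal (g y - (l + n * M)) ∂μ ≤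
      ∫⁻ y, ENNReal.ofReal (g y - l) ∂μ := by
  induction n with
  | zero => simp
  | succ n ih =>
    have hnM : 0 ≤ n * M := by positivity
    have hfin' : μ {y | l + n * M < g y} ≠ ⊤ :=
      measure_ne_top_of_subset (fun y (hy : l + n * M < g y) => (by linarith : l < g y)) hfin
    have hstep := h.two_mul_lintegral_excess_add_le hg hM (add_nonneg hl hnM) hfin'
    rw [pow_succ, mul_assoc, Nat.cast_succ, add_one_mul, ← add_assoc]
    exact (mul_le_mul_right hstep _).trans ih

theorem two_pow_mul_measure_tail_le (h : MeanTailBound μ g M) (hg : AEMeasurable g μ)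
    (hM : 0 < M) (hl : 0 ≤ l) (hfin : μ {y | l < g y} ≠ ⊤) (n : ℕ) :
    2 ^ n * μ {y | l + (n + 1) * M < g y} ≤ μ {y | l < g y} := by
  have hchebyshev : ENNReal.ofReal M * μ {y | l + (n + 1) * M < g y} ≤
      ∫⁻ y, ENNReal.ofReal (g y - (l + n * M)) ∂μ := by
    rw [add_one_mul, ← add_assoc]
    exact le_add_self.trans (lintegral_excess_add_mul_measure_tail_le hg hM.le)
  refine (ENNReal.mul_le_mul_iff_right (ENNReal.ofReal_pos.2 hM).ne' ENNReal.ofReal_ne_top).1 ?_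
  calc ENNReal.ofReal M * (2 ^ n * μ {y | l + (n + 1) * M < g y})
      = 2 ^ n * (ENNReal.ofReal M * μ {y | l + (n + 1) * M < g y}) := mul_left_comm ..
    _ ≤ 2 ^ n * ∫⁻ y, ENNReal.ofReal (g y - (l + n * M)) ∂μ := by gcongr
    _ ≤ ∫⁻ y, ENNReal.ofReal (g y - l) ∂μ := h.two_pow_mul_lintegral_excess_le hg hM.le hl hfin n
    _ ≤ ENNReal.ofReal M * μ {y | l < g y} := h.lintegral_excess_le hg hl hfin

theorem two_pow_mul_measure_tail_le_two_mul (h : MeanTailBound μ g M) (hg : AEMeasurable g μ)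
    (hM : 0 < M) (hl : 0 ≤ l) (hfin : μ {y | l < g y} ≠ ⊤) (n : ℕ) :
    2 ^ n * μ {y | l + n * M < g y} ≤ 2 * μ {y | l < g y} := by
  cases n with
  | zero => simpa using le_mul_of_one_le_left' one_le_two
  | succ n =>
    rw [pow_succ', mul_assoc, Nat.cast_succ]
    gcongr
    exact h.two_pow_mul_measure_tail_le hg hM hl hfin n

theorem measure_tail_le_exp_mul (h : MeanTailBound μ g M) (hg : AEMeasurable g μ)
    (hM : 0 < M) (hl : 0 ≤ l) (hle : l ≤ t) :
    μ {y | t < g y} ≤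
      ENNReal.ofReal (4 * Real.exp (Real.log 2 / M * (l - t))) * μ {y | l < g y} := by
  rcases eq_or_ne (μ {y | l < g y}) ⊤ with htop | hfin
  · rw [htop, ENNReal.mul_top (ENNReal.ofReal_pos.2 (by positivity)).ne']
    exact le_top
  set n : ℕ := ⌊(t - l) / M⌋₊
  have hn : l + n * M ≤ t := by
    have := (le_div_iff₀ hM).1 (Nat.floor_le (div_nonneg (sub_nonneg.2 hle) hM.le))
    linarith
  have hconst : 2 ≤ 2 ^ n * (4 * Real.exp (Real.log 2 / M * (l - t))) := by
    rw [show Real.log 2 / M * (l - t) = -(Real.log 2 * ((t - l) / M)) by ring]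
    exact two_le_two_pow_floor_mul_exp _
  refine (ENNReal.mul_le_mul_iff_right (pow_ne_zero n two_ne_zero)
    (ENNReal.pow_ne_top ENNReal.ofNat_ne_top)).1 ?_
  calc 2 ^ n * μ {y | t < g y}
      ≤ 2 ^ n * μ {y | l + n * M < g y} := by gcongr
    _ ≤ 2 * μ {y | l < g y} := h.two_pow_mul_measure_tail_le_two_mul hg hM hl hfin n
    _ ≤ ENNReal.ofReal (2 ^ n * (4 * Real.exp (Real.log 2 / M * (l - t)))) * μ {y | l < g y} := by
        gcongr
        exact (ENNReal.ofReal_ofNat 2).symm.trans_le (ENNReal.ofReal_le_ofReal hconst)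
    _ = 2 ^ n * (ENNReal.ofReal (4 * Real.exp (Real.log 2 / M * (l - t))) * μ {y | l < g y}) := by
        rw [ENNReal.ofReal_mul (by positivity), ENNReal.ofReal_pow zero_le_two,
          ENNReal.ofReal_ofNat, mul_assoc]

end MeanTailBound

theorem stmt9_general {B : Set X} (hB : MeasurableSet B) (hg : AEMeasurable g (μ.restrict B))
    (hM : 0 < M)
    (h : ∀ l : ℝ, 0 ≤ l → ∫⁻ y in {y | y ∈ B ∧ l < g y}, ENNReal.ofReal (g y) ∂μ ≤
      ENNReal.ofReal (l + M) * μ {y | y ∈ B ∧ l < g y})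
    (hl : 0 ≤ l) (hle : l ≤ t) :
    μ {y | y ∈ B ∧ t < g y} ≤
      ENNReal.ofReal (4 * Real.exp (Real.log 2 / M * (l - t))) * μ {y | y ∈ B ∧ l < g y} := by
  have htail (a : ℝ) : {y | y ∈ B ∧ a < g y} = {y | a < g y} ∩ B := inter_comm _ _
  simp only [htail, ← Measure.restrict_restrict' hB, ← Measure.restrict_apply' hB] at h ⊢
  exact MeanTailBound.measure_tail_le_exp_mul h hg hM hl hle

end

/-- if `f ∈ L¹_loc(X)` satisfies the bounded mean tail oscillation condition
`∫_{{x ∈ B : |f - f_B| > λ}} |f - f_B| dμ ≤ (λ + M) μ({x ∈ B : |f - f_B| > λ})` for all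
`λ ≥ 0` and all balls `B`, then there are `c₁, c₂ > 0` with
`μ({x ∈ B : |f - f_B| > λ₂}) ≤ c₁ μ({x ∈ B : |f - f_B| > λ₁}) e^{c₂(λ₁ - λ₂)}`
for all `0 ≤ λ₁ < λ₂` and all balls `B`. -/
theorem stmt9 {X : Type*} [MetricSpace X] [MeasurableSpace X] [BorelSpace X]
    (μ : Measure X)
    (hball : ∀ (x : X) (r : ℝ), 0 < r → 0 < μ (ball x r) ∧ μ (ball x r) < ⊤)
    (f : X → ℝ) (hf : ∀ (x : X) (r : ℝ), 0 < r → IntegrableOn f (ball x r) μ)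
    (M : ℝ) (hM : 0 ≤ M)
    (h : ∀ (x : X) (r : ℝ), 0 < r → ∀ l : ℝ, 0 ≤ l →
      ∫⁻ y in {y | y ∈ ball x r ∧ l < |f y - meanOn μ f (ball x r)|},
          ENNReal.ofReal |f y - meanOn μ f (ball x r)| ∂μ ≤
        ENNReal.ofReal (l + M) *
          μ {y | y ∈ ball x r ∧ l < |f y - meanOn μ f (ball x r)|}) :
    ∃ c₁ c₂ : ℝ, 0 < c₁ ∧ 0 < c₂ ∧
      ∀ (x : X) (r : ℝ), 0 < r → ∀ l₁ l₂ : ℝ, 0 ≤ l₁ → l₁ < l₂ →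
        μ {y | y ∈ ball x r ∧ l₂ < |f y - meanOn μ f (ball x r)|} ≤
          ENNReal.ofReal (c₁ * Real.exp (c₂ * (l₁ - l₂))) *
            μ {y | y ∈ ball x r ∧ l₁ < |f y - meanOn μ f (ball x r)|} := by
  -- `M + 1` replaces `M` because the rate `log 2 / M` would be `0` for `M = 0`.
  refine ⟨4, Real.log 2 / (M + 1), by norm_num, by positivity, fun x r hr l₁ l₂ hl₁ hl => ?_⟩
  have hg : AEMeasurable (fun y => |f y - meanOn μ f (ball x r)|) (μ.restrict (ball x r)) :=
    ((hf x r hr).aemeasurable.sub_const _).abs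
  refine stmt9_general measurableSet_ball hg (by positivity) (fun l hl => ?_) hl₁ hl.le
  exact (h x r hr l hl).trans (by gcongr; linarith)
end

section
/- Let (X,d,μ) be a metric measure space and let f ∈ L¹_loc(X). Suppose there exist constants c₁, c₂ > 0 such that μ({x ∈ B : |f(x) − f_B| > λ₂}) ≤ c₁ · μ({x ∈ B : |f(x) − f_B| > λ₁}) · e^{c₂(λ₁ − λ₂)} for all 0 ≤ λ₁ < λ₂ and all balls B ⊂ X. Then with M = c₁/c₂, for all λ ≥ 0 and all balls B ⊂ X, ∫_{{x ∈ B : |f(x) − f_B| > λ}} |f − f_B| dμ ≤ (λ + M) · μ({x ∈ B : |f(x) − f_B| > λ}). -/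
open MeasureTheory Metric Set ENNReal

/-! With `g = |f - f_B|`, write `g = l + (g - l)` on `{l < g}`. By the layer cake formula the
excess `g - l` contributes `∫₀^∞ μ {l + t < g} dt`, which the decay from level `l` to level `l + t`
bounds by `μ {l < g}` times `∫₀^∞ c₁ e^{-c₂ t} dt = c₁ / c₂`. -/

theorem lintegral_const_mul_exp_neg_mul_Ioi (c : ℝ) {b : ℝ} (hb : 0 < b) :
    ∫⁻ t in Ioi (0 : ℝ), ENNReal.ofReal (c * Real.exp (-b * t)) = ENNReal.ofReal (c / b) := by
  have hb' : -b < 0 := neg_lt_zero.2 hb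
  have hexp : ∫⁻ t in Ioi (0 : ℝ), ENNReal.ofReal (Real.exp (-b * t)) =
      ENNReal.ofReal b⁻¹ := by
    rw [← ofReal_integral_eq_lintegral_ofReal (integrableOn_exp_mul_Ioi hb' 0)
      (ae_of_all _ fun _ ↦ (Real.exp_pos _).le), integral_exp_mul_Ioi hb', mul_zero,
      Real.exp_zero, neg_div_neg_eq, one_div]
  calc ∫⁻ t in Ioi (0 : ℝ), ENNReal.ofReal (c * Real.exp (-b * t))
      = ∫⁻ t in Ioi (0 : ℝ), ENNReal.ofReal c * ENNReal.ofReal (Real.exp (-b * t)) := by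
        simp only [ENNReal.ofReal_mul' (Real.exp_pos _).le]
    _ = ENNReal.ofReal c * ENNReal.ofReal b⁻¹ := by
        rw [lintegral_const_mul _ (by fun_prop), hexp]
    _ = ENNReal.ofReal (c / b) := by
        rw [← ENNReal.ofReal_mul' (inv_nonneg.2 hb.le), div_eq_mul_inv]

section Superlevel

variable {α : Type*} [MeasurableSpace α] {ν : Measure α} {g : α → ℝ}

theorem lintegral_ofReal_sub_eq_lintegral_meas_add_lt (hg : AEMeasurable g ν) (l : ℝ) :
    ∫⁻ x, ENNReal.ofReal (g x - l) ∂ν = ∫⁻ t in Ioi (0 : ℝ), ν {x | l + t < g x} := by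
  have hset {t : ℝ} (ht : 0 < t) : {x | t < max (g x - l) 0} = {x | l + t < g x} := by
    ext x
    simp only [mem_ofPred_eq, lt_max_iff, ht.not_gt, or_false, lt_sub_iff_add_lt']
  calc ∫⁻ x, ENNReal.ofReal (g x - l) ∂ν
      = ∫⁻ x, ENNReal.ofReal (max (g x - l) 0) ∂ν := by
        simp only [ENNReal.ofReal_max, ENNReal.ofReal_zero, max_zero]
    _ = ∫⁻ t in Ioi (0 : ℝ), ν {x | t < max (g x - l) 0} :=
        lintegral_eq_lintegral_meas_lt ν (ae_of_all _ fun _ ↦ le_max_right _ _)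
          ((hg.sub_const l).max aemeasurable_const)
    _ = ∫⁻ t in Ioi (0 : ℝ), ν {x | l + t < g x} :=
        setLIntegral_congr_fun measurableSet_Ioi fun t ht ↦ congrArg ν (hset ht)

theorem setLIntegral_ofReal_superlevel_eq (hg : AEMeasurable g ν) {l : ℝ} (hl : 0 ≤ l) :
    ∫⁻ x in {x | l < g x}, ENNReal.ofReal (g x) ∂ν =
      ENNReal.ofReal l * ν {x | l < g x} + ∫⁻ t in Ioi (0 : ℝ), ν {x | l + t < g x} := by
  have hsupport : Function.support (fun x ↦ ENNReal.ofReal (g x - l)) ⊆ {x | l < g x} :=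
    fun x hx ↦ sub_pos.1 (ENNReal.ofReal_pos.1 (pos_iff_ne_zero.2 hx))
  have hsplit : ∀ᵐ x ∂ν.restrict {x | l < g x},
      ENNReal.ofReal (g x) = ENNReal.ofReal l + ENNReal.ofReal (g x - l) := by
    filter_upwards [ae_restrict_mem₀ (nullMeasurableSet_lt aemeasurable_const hg)] with x hx
    rw [← ENNReal.ofReal_add hl (sub_nonneg.2 hx.le), add_sub_cancel]
  rw [lintegral_congr_ae hsplit, lintegral_add_left measurable_const, setLIntegral_const,
    setLIntegral_eq_of_support_subset hsupport,
    lintegral_ofReal_sub_eq_lintegral_meas_add_lt hg]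

theorem setLIntegral_ofReal_superlevel_le (hg : AEMeasurable g ν) {l : ℝ} (hl : 0 ≤ l)
    {φ : ℝ → ℝ≥0∞} (hφ : AEMeasurable φ (volume.restrict (Ioi 0)))
    (h : ∀ t, 0 < t → ν {x | l + t < g x} ≤ φ t * ν {x | l < g x}) :
    ∫⁻ x in {x | l < g x}, ENNReal.ofReal (g x) ∂ν ≤
      (ENNReal.ofReal l + ∫⁻ t in Ioi (0 : ℝ), φ t) * ν {x | l < g x} := by
  rw [setLIntegral_ofReal_superlevel_eq hg hl, add_mul, ← lintegral_mul_const'' _ hφ]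
  exact add_le_add_right (setLIntegral_mono' measurableSet_Ioi h) _

end Superlevel

theorem stmt10_general {X : Type*} [MeasurableSpace X] {μ : Measure X} {B : Set X} {g : X → ℝ}
    (hg : AEMeasurable g (μ.restrict B)) {c₁ c₂ l : ℝ} (hc₁ : 0 ≤ c₁) (hc₂ : 0 < c₂)
    (hl : 0 ≤ l)
    (h : ∀ l₂, l < l₂ → μ {y | y ∈ B ∧ l₂ < g y} ≤
      ENNReal.ofReal (c₁ * Real.exp (c₂ * (l - l₂))) * μ {y | y ∈ B ∧ l < g y}) :
    ∫⁻ y in {y | y ∈ B ∧ l < g y}, ENNReal.ofReal (g y) ∂μ ≤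
      ENNReal.ofReal (l + c₁ / c₂) * μ {y | y ∈ B ∧ l < g y} := by
  have hnull (t : ℝ) : NullMeasurableSet {y | t < g y} (μ.restrict B) :=
    nullMeasurableSet_lt aemeasurable_const hg
  have hinter (t : ℝ) : {y | y ∈ B ∧ t < g y} = {y | t < g y} ∩ B := inter_comm _ _
  simp only [hinter, ← Measure.restrict_apply₀ (hnull _)] at h ⊢
  have hdecay (t : ℝ) (ht : 0 < t) : μ.restrict B {y | l + t < g y} ≤
      ENNReal.ofReal (c₁ * Real.exp (-c₂ * t)) * μ.restrict B {y | l < g y} := by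
    have hexponent : c₂ * (l - (l + t)) = -c₂ * t := by ring
    simpa only [hexponent] using h (l + t) (lt_add_of_pos_right l ht)
  rw [← Measure.restrict_restrict₀ (hnull l), ENNReal.ofReal_add hl (div_nonneg hc₁ hc₂.le),
    ← lintegral_const_mul_exp_neg_mul_Ioi c₁ hc₂]
  exact setLIntegral_ofReal_superlevel_le hg hl (by fun_prop) hdecay

/-- if `μ({x ∈ B : |f - f_B| > λ₂}) ≤ c₁ μ({x ∈ B : |f - f_B| > λ₁}) e^{c₂(λ₁-λ₂)}`
for all `0 ≤ λ₁ < λ₂` and all balls `B`, then with `M = c₁/c₂`, for all `λ ≥ 0` and all balls,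
`∫_{{x ∈ B : |f - f_B| > λ}} |f - f_B| dμ ≤ (λ + M) μ({x ∈ B : |f - f_B| > λ})`. -/
theorem stmt10 {X : Type*} [MetricSpace X] [MeasurableSpace X] [BorelSpace X]
    (μ : Measure X)
    (hball : ∀ (x : X) (r : ℝ), 0 < r → 0 < μ (ball x r) ∧ μ (ball x r) < ⊤)
    (f : X → ℝ) (hf : ∀ (x : X) (r : ℝ), 0 < r → IntegrableOn f (ball x r) μ)
    (c₁ c₂ : ℝ) (hc₁ : 0 < c₁) (hc₂ : 0 < c₂)
    (h : ∀ (x : X) (r : ℝ), 0 < r → ∀ l₁ l₂ : ℝ, 0 ≤ l₁ → l₁ < l₂ →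
      μ {y | y ∈ ball x r ∧ l₂ < |f y - meanOn μ f (ball x r)|} ≤
        ENNReal.ofReal (c₁ * Real.exp (c₂ * (l₁ - l₂))) *
          μ {y | y ∈ ball x r ∧ l₁ < |f y - meanOn μ f (ball x r)|}) :
    ∀ (x : X) (r : ℝ), 0 < r → ∀ l : ℝ, 0 ≤ l →
      ∫⁻ y in {y | y ∈ ball x r ∧ l < |f y - meanOn μ f (ball x r)|},
          ENNReal.ofReal |f y - meanOn μ f (ball x r)| ∂μ ≤
        ENNReal.ofReal (l + c₁ / c₂) *
          μ {y | y ∈ ball x r ∧ l < |f y - meanOn μ f (ball x r)|} :=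
  fun x r hr l hl ↦ stmt10_general ((hf x r hr).aemeasurable.sub_const _).norm hc₁.le hc₂ hl
    fun l₂ hl₂ ↦ h x r hr l l₂ hl hl₂
end

section
/- Let (X,d,μ) be a metric measure space and let f ∈ L¹_loc(X) be of bounded mean tail oscillation with constant M ≥ 0, i.e. ∫_{{x ∈ B : |f(x) − f_B| > λ}} |f − f_B| dμ ≤ (λ + M)·μ({x ∈ B : |f(x) − f_B| > λ}) for all λ ≥ 0 and all balls B. Then f is of bounded mean oscillation with sup_B ⨍_B |f − f_B| dμ ≤ M, and f satisfies the John–Nirenberg inequality: there exist constants c₁, c₂ > 0 such that μ({x ∈ B : |f(x) − f_B| > λ}) ≤ c₁ · μ(B) · e^{−c₂ λ / M} for all λ > 0 and all balls B ⊂ X. -/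
open MeasureTheory Metric Set ENNReal

/-!
Write `g = |f - f_B|` and let `φ(l) = ∫_B (g - l)⁺ dμ`. Removing the part `l · μ(g > l)` from both
sides turns the hypothesis into `φ(l) ≤ M μ(g > l)`, whose case `l = 0` is the bound on the mean
oscillation. Since `φ(l) ≥ φ(l + δ) + δ μ(g > l + δ) ≥ (1 + δ / M) φ(l + δ)`, iterating `n` times
with `δ = l / n` and letting `n → ∞` gives `φ(l) ≤ e^{-l / M} φ(0)`. The decay of `φ` passes to the
distribution function through `M μ(g > l) ≤ φ(l - M)`, with the constants `c₁ = e` and `c₂ = 1`.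
-/

section TailExcess

variable {X : Type*} [MeasurableSpace X] {ν : Measure X} {g : X → ℝ} {l δ M : ℝ}

/-- The total excess `∫ (g - l)⁺ dν` of `g` over the level `l`, with values in `[0, ∞]`;
the positive part is taken by `ENNReal.ofReal`. It carries the decay in the John–Nirenberg
inequality. -/
noncomputable def tailExcess (ν : Measure X) (g : X → ℝ) (l : ℝ) : ℝ≥0∞ :=
  ∫⁻ y, ENNReal.ofReal (g y - l) ∂ν

theorem setLIntegral_lt_eq_add_tailExcess (hg : AEMeasurable g ν) (hl : 0 ≤ l) :
    ∫⁻ y in {y | l < g y}, ENNReal.ofReal (g y) ∂ν =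
      ENNReal.ofReal l * ν {y | l < g y} + tailExcess ν g l := by
  have hset : NullMeasurableSet {y | l < g y} ν := nullMeasurableSet_lt aemeasurable_const hg
  have hsplit : ∫⁻ y in {y | l < g y}, ENNReal.ofReal (g y) ∂ν =
      ∫⁻ y in {y | l < g y}, (ENNReal.ofReal l + ENNReal.ofReal (g y - l)) ∂ν := by
    refine lintegral_congr_ae ?_
    filter_upwards [ae_restrict_mem₀ hset] with y hy
    rw [← ENNReal.ofReal_add hl (sub_nonneg.2 (le_of_lt hy)), add_sub_cancel]
  have hsupp : Function.support (fun y => ENNReal.ofReal (g y - l)) ⊆ {y | l < g y} := by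
    intro y hy
    simpa using hy
  rw [hsplit, lintegral_add_left measurable_const, setLIntegral_const,
    setLIntegral_eq_of_support_subset hsupp, tailExcess]

theorem tailExcess_le_of_setLIntegral_le (hg : AEMeasurable g ν) (hl : 0 ≤ l) (hM : 0 ≤ M)
    (hfin : ν {y | l < g y} ≠ ∞)
    (h : ∫⁻ y in {y | l < g y}, ENNReal.ofReal (g y) ∂ν ≤
      ENNReal.ofReal (l + M) * ν {y | l < g y}) :
    tailExcess ν g l ≤ ENNReal.ofReal M * ν {y | l < g y} := by
  rw [setLIntegral_lt_eq_add_tailExcess hg hl, ENNReal.ofReal_add hl hM, add_mul] at h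
  exact (ENNReal.add_le_add_iff_left (ENNReal.mul_ne_top ENNReal.ofReal_ne_top hfin)).1 h

theorem tailExcess_add_mul_measure_le (hg : AEMeasurable g ν) (hδ : 0 ≤ δ) :
    tailExcess ν g (l + δ) + ENNReal.ofReal δ * ν {y | l + δ < g y} ≤ tailExcess ν g l := by
  have hset : NullMeasurableSet {y | l + δ < g y} ν := nullMeasurableSet_lt aemeasurable_const hg
  rw [tailExcess, ← lintegral_indicator_const₀ hset,
    ← lintegral_add_left' (hg.sub_const _).ennreal_ofReal]
  refine lintegral_mono fun y => ?_
  by_cases hy : l + δ < g y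
  · rw [indicator_of_mem (by exact hy), ← ENNReal.ofReal_add (by linarith) hδ]
    exact ENNReal.ofReal_le_ofReal (by linarith)
  · rw [indicator_of_notMem (by exact hy), add_zero]
    exact ENNReal.ofReal_le_ofReal (by linarith)

theorem mul_measure_lt_le_tailExcess_sub (hg : AEMeasurable g ν) (hδ : 0 ≤ δ) :
    ENNReal.ofReal δ * ν {y | l < g y} ≤ tailExcess ν g (l - δ) := by
  simpa only [sub_add_cancel] using
    le_add_self.trans (tailExcess_add_mul_measure_le (l := l - δ) hg hδ)

theorem one_add_div_mul_tailExcess_add_le (hg : AEMeasurable g ν) (hM : 0 < M) (hδ : 0 ≤ δ)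
    (h : tailExcess ν g (l + δ) ≤ ENNReal.ofReal M * ν {y | l + δ < g y}) :
    ENNReal.ofReal (1 + δ / M) * tailExcess ν g (l + δ) ≤ tailExcess ν g l := by
  have hδM : 0 ≤ δ / M := by positivity
  calc ENNReal.ofReal (1 + δ / M) * tailExcess ν g (l + δ)
      = tailExcess ν g (l + δ) + ENNReal.ofReal (δ / M) * tailExcess ν g (l + δ) := by
        rw [ENNReal.ofReal_add zero_le_one hδM, ENNReal.ofReal_one, add_mul, one_mul]
    _ ≤ tailExcess ν g (l + δ) +
          ENNReal.ofReal (δ / M) * (ENNReal.ofReal M * ν {y | l + δ < g y}) := by gcongr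
    _ = tailExcess ν g (l + δ) + ENNReal.ofReal δ * ν {y | l + δ < g y} := by
        rw [← mul_assoc, ← ENNReal.ofReal_mul hδM, div_mul_cancel₀ _ hM.ne']
    _ ≤ tailExcess ν g l := tailExcess_add_mul_measure_le hg hδ

theorem one_add_div_pow_mul_tailExcess_le (hg : AEMeasurable g ν) (hM : 0 < M) (hδ : 0 ≤ δ)
    (h : ∀ l, 0 ≤ l → tailExcess ν g l ≤ ENNReal.ofReal M * ν {y | l < g y}) (n : ℕ) :
    ENNReal.ofReal ((1 + δ / M) ^ n) * tailExcess ν g (n * δ) ≤ tailExcess ν g 0 := by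
  induction n with
  | zero => simp
  | succ n ih =>
    have hstep : ENNReal.ofReal (1 + δ / M) * tailExcess ν g (n * δ + δ) ≤
        tailExcess ν g (n * δ) :=
      one_add_div_mul_tailExcess_add_le hg hM hδ (h _ (by positivity))
    calc ENNReal.ofReal ((1 + δ / M) ^ (n + 1)) * tailExcess ν g ((n + 1 : ℕ) * δ)
        = ENNReal.ofReal ((1 + δ / M) ^ n) *
            (ENNReal.ofReal (1 + δ / M) * tailExcess ν g (n * δ + δ)) := by
          rw [pow_succ, ENNReal.ofReal_mul (by positivity), mul_assoc, Nat.cast_succ, add_one_mul]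
      _ ≤ ENNReal.ofReal ((1 + δ / M) ^ n) * tailExcess ν g (n * δ) := by gcongr
      _ ≤ tailExcess ν g 0 := ih

theorem exp_mul_tailExcess_le (hg : AEMeasurable g ν) (hM : 0 < M) (hl : 0 ≤ l)
    (h : ∀ l, 0 ≤ l → tailExcess ν g l ≤ ENNReal.ofReal M * ν {y | l < g y}) :
    ENNReal.ofReal (Real.exp (l / M)) * tailExcess ν g l ≤ tailExcess ν g 0 := by
  have hlim : Filter.Tendsto
      (fun n : ℕ => ENNReal.ofReal ((1 + l / M / n) ^ n) * tailExcess ν g l) Filter.atTop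
      (nhds (ENNReal.ofReal (Real.exp (l / M)) * tailExcess ν g l)) :=
    ENNReal.Tendsto.mul_const
      (ENNReal.tendsto_ofReal (Real.tendsto_one_add_div_pow_exp (l / M)))
      (.inl (ENNReal.ofReal_pos.2 (Real.exp_pos _)).ne')
  refine le_of_tendsto hlim ?_
  filter_upwards [Filter.eventually_ne_atTop 0] with n hn
  have hn' : (n : ℝ) ≠ 0 := Nat.cast_ne_zero.2 hn
  have hstep := one_add_div_pow_mul_tailExcess_le hg hM (δ := l / n) (by positivity) h n
  rwa [mul_div_cancel₀ l hn', div_right_comm] at hstep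

theorem measure_lt_le_of_tailExcess_le (hg : AEMeasurable g ν) (hM : 0 ≤ M)
    (h : ∀ l, 0 ≤ l → tailExcess ν g l ≤ ENNReal.ofReal M * ν {y | l < g y}) (l : ℝ) :
    ν {y | l < g y} ≤ ENNReal.ofReal (Real.exp (1 - l / M)) * ν univ := by
  -- The trivial case also covers `M = 0`, where `l / M = 0`.
  rcases le_or_gt (l / M) 1 with hlM | hlM
  · calc ν {y | l < g y} ≤ 1 * ν univ := by
          rw [one_mul]
          exact measure_mono (subset_univ _)
      _ ≤ ENNReal.ofReal (Real.exp (1 - l / M)) * ν univ := by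
          gcongr
          exact ENNReal.one_le_ofReal.2 (Real.one_le_exp (sub_nonneg.2 hlM))
  have hMpos : 0 < M := hM.lt_of_ne' (by rintro rfl; norm_num at hlM)
  have hMl : 0 ≤ l - M := sub_nonneg.2 ((one_lt_div hMpos).1 hlM).le
  have hexp : Real.exp (1 - l / M) * Real.exp ((l - M) / M) = 1 := by
    rw [← Real.exp_add, sub_div, div_self hMpos.ne', sub_add_sub_cancel, sub_self, Real.exp_zero]
  have hzero : tailExcess ν g 0 ≤ ENNReal.ofReal M * ν univ :=
    (h 0 le_rfl).trans (by gcongr; exact subset_univ _)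
  refine (ENNReal.mul_le_mul_iff_right (ENNReal.ofReal_pos.2 hMpos).ne' ENNReal.ofReal_ne_top).1 ?_
  calc ENNReal.ofReal M * ν {y | l < g y}
      ≤ tailExcess ν g (l - M) := mul_measure_lt_le_tailExcess_sub hg hM
    _ = ENNReal.ofReal (Real.exp (1 - l / M)) *
          (ENNReal.ofReal (Real.exp ((l - M) / M)) * tailExcess ν g (l - M)) := by
        rw [← mul_assoc, ← ENNReal.ofReal_mul (Real.exp_nonneg _), hexp, ENNReal.ofReal_one,
          one_mul]
    _ ≤ ENNReal.ofReal (Real.exp (1 - l / M)) * (ENNReal.ofReal M * ν univ) :=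
        mul_le_mul' le_rfl ((exp_mul_tailExcess_le hg hMpos hMl h).trans hzero)
    _ = ENNReal.ofReal M * (ENNReal.ofReal (Real.exp (1 - l / M)) * ν univ) :=
        mul_left_comm _ _ _

theorem average_le_of_tailExcess_zero_le (hg : AEMeasurable g ν) (hg₀ : 0 ≤ g) (hM : 0 ≤ M)
    (h : tailExcess ν g 0 ≤ ENNReal.ofReal M * ν univ) : ⨍ y, g y ∂ν ≤ M := by
  have hlaverage : ⨍⁻ y, ENNReal.ofReal (g y) ∂ν ≤ ENNReal.ofReal M := by
    rw [laverage_eq]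
    exact ENNReal.div_le_of_le_mul (by simpa only [tailExcess, sub_zero] using h)
  calc ⨍ y, g y ∂ν = ⨍ y, (ENNReal.ofReal (g y)).toReal ∂ν := by
        simp only [ENNReal.toReal_ofReal (hg₀ _)]
    _ = (⨍⁻ y, ENNReal.ofReal (g y) ∂ν).toReal :=
        (toReal_laverage hg.ennreal_ofReal (.of_forall fun _ => ENNReal.ofReal_ne_top)).symm
    _ ≤ M := ENNReal.toReal_le_of_le_ofReal hM hlaverage

end TailExcess

theorem stmt11_general {X : Type*} [MeasurableSpace X] {μ : Measure X} {B : Set X}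
    (hB : NullMeasurableSet B μ) (hμB : μ B ≠ ∞) {f : X → ℝ} (hf : AEMeasurable f (μ.restrict B))
    (a : ℝ) {M : ℝ} (hM : 0 ≤ M)
    (h : ∀ l : ℝ, 0 ≤ l →
      ∫⁻ y in {y | y ∈ B ∧ l < |f y - a|}, ENNReal.ofReal |f y - a| ∂μ ≤
        ENNReal.ofReal (l + M) * μ {y | y ∈ B ∧ l < |f y - a|}) :
    (⨍ y in B, |f y - a| ∂μ) ≤ M ∧
      ∀ l : ℝ, μ {y | y ∈ B ∧ l < |f y - a|} ≤
        ENNReal.ofReal (Real.exp (1 - l / M)) * μ B := by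
  have hg : AEMeasurable (fun y => |f y - a|) (μ.restrict B) := (hf.sub_const a).abs
  have hset (l : ℝ) : {y | y ∈ B ∧ l < |f y - a|} = {y | l < |f y - a|} ∩ B :=
    inter_comm B {y | l < |f y - a|}
  have hfin (l : ℝ) : μ.restrict B {y | l < |f y - a|} ≠ ∞ :=
    measure_ne_top_of_subset (subset_univ _) (by rwa [Measure.restrict_apply_univ])
  have hexcess (l : ℝ) (hl : 0 ≤ l) : tailExcess (μ.restrict B) (fun y => |f y - a|) l ≤
      ENNReal.ofReal M * μ.restrict B {y | l < |f y - a|} := by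
    refine tailExcess_le_of_setLIntegral_le hg hl hM (hfin l) ?_
    rw [Measure.restrict_restrict₀' hB, Measure.restrict_apply₀' hB, ← hset]
    exact h l hl
  refine ⟨average_le_of_tailExcess_zero_le hg (fun _ => abs_nonneg _) hM
    ((hexcess 0 le_rfl).trans (by gcongr; exact subset_univ _)), fun l => ?_⟩
  rw [hset, ← Measure.restrict_apply₀' hB, ← Measure.restrict_apply_univ B]
  exact measure_lt_le_of_tailExcess_le hg hM hexcess l

/-- a function of bounded mean tail oscillation with constant `M` is of bounded
mean oscillation with `sup_B ⨍_B |f - f_B| dμ ≤ M`, and satisfies the John–Nirenberg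
inequality `μ({x ∈ B : |f - f_B| > λ}) ≤ c₁ μ(B) e^{-c₂ λ / M}`. -/
theorem stmt11 {X : Type*} [MetricSpace X] [MeasurableSpace X] [BorelSpace X]
    (μ : Measure X)
    (hball : ∀ (x : X) (r : ℝ), 0 < r → 0 < μ (ball x r) ∧ μ (ball x r) < ⊤)
    (f : X → ℝ) (hf : ∀ (x : X) (r : ℝ), 0 < r → IntegrableOn f (ball x r) μ)
    (M : ℝ) (hM : 0 ≤ M)
    (h : ∀ (x : X) (r : ℝ), 0 < r → ∀ l : ℝ, 0 ≤ l →
      ∫⁻ y in {y | y ∈ ball x r ∧ l < |f y - meanOn μ f (ball x r)|},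
          ENNReal.ofReal |f y - meanOn μ f (ball x r)| ∂μ ≤
        ENNReal.ofReal (l + M) *
          μ {y | y ∈ ball x r ∧ l < |f y - meanOn μ f (ball x r)|}) :
    (∀ (x : X) (r : ℝ), 0 < r →
      (⨍ y in ball x r, |f y - meanOn μ f (ball x r)| ∂μ) ≤ M) ∧
    (∃ c₁ c₂ : ℝ, 0 < c₁ ∧ 0 < c₂ ∧
      ∀ (x : X) (r : ℝ), 0 < r → ∀ l : ℝ, 0 < l →
        μ {y | y ∈ ball x r ∧ l < |f y - meanOn μ f (ball x r)|} ≤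
          ENNReal.ofReal (c₁ * Real.exp (-c₂ * l / M)) * μ (ball x r)) := by
  have hgen (x : X) (r : ℝ) (hr : 0 < r) :=
    stmt11_general measurableSet_ball.nullMeasurableSet (hball x r hr).2.ne
      (hf x r hr).aemeasurable _ hM (h x r hr)
  refine ⟨fun x r hr => (hgen x r hr).1, Real.exp 1, 1, Real.exp_pos 1, one_pos,
    fun x r hr l _ => ?_⟩
  rw [← Real.exp_add, neg_one_mul, neg_div, ← sub_eq_add_neg]
  exact (hgen x r hr).2 l
end

section
/- Let (X,d,μ) be a doubling metric measure space. A μ-measurable function f belongs to L^∞(X) (i.e. is essentially bounded) if and only if there exists M ≥ 0 such that ∫_{{x ∈ B : |f(x)| > λ}} |f| dμ ≤ (λ + M) · μ({x ∈ B : |f(x)| > λ}) for all balls B ⊂ X and all λ ≥ 0. -/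
open MeasureTheory Metric Set ENNReal NNReal

/-! For `λ = 0` the condition says that the mean of `|f|` over every ball is at most `M`. The family
of those balls is fine enough for the Vitali covering theorem, which turns the bound
`∫_B |f| ≤ M μ(B)` on small balls into `∫_s |f| ≤ M μ(s)` on every set `s`, so `|f| ≤ M` almost
everywhere. The covering theorem needs a separable space: a maximal disjoint family of balls of a
given radius is countable, because the measure is σ-finite and balls have positive measure. -/

section GeneralLemmas

open Filter Topology

section Separability

variable {X : Type*} [MeasurableSpace X] {μ : Measure X}

theorem countable_of_pairwiseDisjoint_of_nonempty_interior [TopologicalSpace X] [SFinite μ]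
    [μ.IsOpenPosMeasure] {ι : Type*} {u : Set ι} {s : ι → Set X}
    (hs : ∀ i ∈ u, MeasurableSet (s i)) (hdisj : u.PairwiseDisjoint s)
    (hne : ∀ i ∈ u, (interior (s i)).Nonempty) : u.Countable := by
  have hcount := Measure.countable_meas_pos_of_disjoint_iUnion (μ := μ) (fun i : u ↦ hs i i.2)
    hdisj.subtype
  have hpos (i : u) : 0 < μ (s i) := Measure.measure_pos_of_nonempty_interior μ (hne i i.2)
  simpa only [hpos, ofPred_true, countable_univ_iff, countable_coe_iff] using hcount

variable [PseudoMetricSpace X]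

theorem secondCountableTopology_of_isOpenPosMeasure [OpensMeasurableSpace X] (μ : Measure X)
    [SFinite μ] [μ.IsOpenPosMeasure] : SecondCountableTopology X := by
  refine secondCountable_of_almost_dense_set fun ε hε ↦ ?_
  have hr : 0 < ε / 5 := by positivity
  obtain ⟨u, -, hdisj, hcover⟩ := Vitali.exists_disjoint_subfamily_covering_enlargement_closedBall
    univ id (fun _ : X ↦ ε / 5) (ε / 5) (fun _ _ ↦ le_rfl) 5 (by norm_num)
  refine ⟨u, ?_, fun x ↦ ?_⟩
  · exact countable_of_pairwiseDisjoint_of_nonempty_interior (μ := μ)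
      (fun _ _ ↦ measurableSet_closedBall) hdisj
      fun _ _ ↦ (nonempty_ball.2 hr).mono ball_subset_interior_closedBall
  · obtain ⟨y, hy, hsub⟩ := hcover x (mem_univ x)
    have hxy : x ∈ closedBall y (5 * (ε / 5)) := hsub (mem_closedBall_self hr.le)
    rw [mul_div_cancel₀ ε (by norm_num)] at hxy
    exact ⟨y, hy, hxy⟩

theorem isOpenPosMeasure_of_measure_ball_pos (h : ∀ (x : X) (r : ℝ), 0 < r → 0 < μ (ball x r)) :
    μ.IsOpenPosMeasure where
  open_pos U hU := by
    rintro ⟨x, hx⟩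
    obtain ⟨r, hr, hsub⟩ := Metric.isOpen_iff.1 hU x hx
    exact ((h x r hr).trans_le (measure_mono hsub)).ne'

theorem isLocallyFiniteMeasure_of_measure_ball_lt_top
    (h : ∀ (x : X) (r : ℝ), 0 < r → μ (ball x r) < ∞) : IsLocallyFiniteMeasure μ :=
  ⟨fun x ↦ ⟨ball x 1, ball_mem_nhds x one_pos, h x 1 one_pos⟩⟩

theorem sigmaFinite_of_measure_ball_lt_top (h : ∀ (x : X) (r : ℝ), 0 < r → μ (ball x r) < ∞) :
    SigmaFinite μ := by
  cases isEmpty_or_nonempty X with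
  | inl _ => infer_instance
  | inr hX =>
    obtain ⟨x⟩ := hX
    exact ⟨⟨⟨fun n : ℕ ↦ ball x (n + 1), fun _ ↦ trivial, fun n ↦ h x _ n.cast_add_one_pos,
      iUnion_ball_nat_succ x⟩⟩⟩

theorem secondCountableTopology_of_measure_ball [OpensMeasurableSpace X]
    (h : ∀ (x : X) (r : ℝ), 0 < r → 0 < μ (ball x r) ∧ μ (ball x r) < ∞) :
    SecondCountableTopology X :=
  have := sigmaFinite_of_measure_ball_lt_top fun x r hr ↦ (h x r hr).2
  have := isOpenPosMeasure_of_measure_ball_pos fun x r hr ↦ (h x r hr).1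
  secondCountableTopology_of_isOpenPosMeasure μ

end Separability

section Averages

variable {X : Type*} [PseudoMetricSpace X] [MeasurableSpace X] {μ ν : Measure X}

theorem isUnifLocDoublingMeasure_of_eventually_measure_ball_le {C : ℝ≥0}
    (h : ∀ᶠ r in 𝓝[>] 0, ∀ x, μ (ball x (2 * r)) ≤ C * μ (ball x r)) :
    IsUnifLocDoublingMeasure μ := by
  refine ⟨C * C, ?_⟩
  filter_upwards [h, eventually_nhdsGT_zero_mul_left two_pos h, self_mem_nhdsWithin]
    with r hr h2r (hpos : 0 < r) x
  calc μ (closedBall x (2 * r)) ≤ μ (ball x (2 * (2 * r))) := by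
        gcongr
        exact closedBall_subset_ball (by linarith)
    _ ≤ C * μ (ball x (2 * r)) := h2r x
    _ ≤ C * (C * μ (ball x r)) := by gcongr; exact hr x
    _ ≤ C * (C * μ (closedBall x r)) := by gcongr; exact ball_subset_closedBall
    _ = ↑(C * C) * μ (closedBall x r) := by rw [ENNReal.coe_mul, mul_assoc]

theorem tendsto_measure_ball_nhdsGT [OpensMeasurableSpace X] {x : X} {r : ℝ}
    (hfin : ∃ R > r, μ (ball x R) ≠ ∞) :
    Tendsto (fun R ↦ μ (ball x R)) (𝓝[>] r) (𝓝 (μ (closedBall x r))) := by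
  rw [← biInter_gt_ball]
  exact tendsto_measure_biInter_gt (fun _ _ ↦ measurableSet_ball.nullMeasurableSet)
    (fun _ _ _ hij ↦ ball_subset_ball hij) hfin

theorem measure_closedBall_le_mul_of_eventually_measure_ball_le_mul [OpensMeasurableSpace X]
    {c : ℝ≥0} {x : X} {r : ℝ} (hfin : ∃ R > r, μ (ball x R) ≠ ∞)
    (h : ∀ᶠ R in 𝓝[>] r, ν (ball x R) ≤ c * μ (ball x R)) :
    ν (closedBall x r) ≤ c * μ (closedBall x r) := by
  refine ge_of_tendsto
    (ENNReal.Tendsto.const_mul (tendsto_measure_ball_nhdsGT hfin) (.inr coe_ne_top)) ?_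
  filter_upwards [h, self_mem_nhdsWithin] with R hR hrR
  exact (measure_mono (closedBall_subset_ball hrR)).trans hR

variable [BorelSpace X] [SecondCountableTopology X] [IsLocallyFiniteMeasure μ] {g : X → ℝ≥0∞}
  {c : ℝ≥0}

theorem ae_le_of_frequently_setLIntegral_le_mul (v : VitaliFamily μ) (hg : AEMeasurable g μ)
    (h : ∀ x, ∃ᶠ a in v.filterAt x, ∫⁻ y in a, g y ∂μ ≤ c * μ a) : ∀ᵐ x ∂μ, g x ≤ c := by
  refine ae_le_of_forall_setLIntegral_le_of_sigmaFinite₀ hg fun s _ _ ↦ ?_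
  rw [setLIntegral_const, ← withDensity_apply' g s]
  refine v.measure_le_of_frequently_le (c • μ) (withDensity_absolutelyContinuous μ g) s
    fun x _ ↦ (h x).mono fun a ha ↦ ?_
  rwa [withDensity_apply' g a]

theorem ae_le_of_eventually_setLIntegral_ball_le_mul [IsUnifLocDoublingMeasure μ]
    (hg : AEMeasurable g μ)
    (h : ∀ x, ∀ᶠ r in 𝓝[>] 0, ∫⁻ y in ball x r, g y ∂μ ≤ c * μ (ball x r)) :
    ∀ᵐ x ∂μ, g x ≤ c := by
  refine ae_le_of_frequently_setLIntegral_le_mul (IsUnifLocDoublingMeasure.vitaliFamily μ 1) hg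
    fun x ↦ ?_
  have hballs : Tendsto (closedBall x) (𝓝[>] 0)
      ((IsUnifLocDoublingMeasure.vitaliFamily μ 1).filterAt x) := by
    refine IsUnifLocDoublingMeasure.tendsto_closedBall_filterAt μ (fun _ ↦ x) id tendsto_id ?_
    filter_upwards [self_mem_nhdsWithin] with r (hr : 0 < r)
    exact mem_closedBall_self (by simpa using hr.le)
  obtain ⟨R, hR, hfin⟩ : ∃ R > 0, μ (ball x R) < ∞ := by
    obtain ⟨s, hs, hμs⟩ := μ.finiteAt_nhds x
    obtain ⟨R, hR, hsub⟩ := Metric.mem_nhds_iff.1 hs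
    exact ⟨R, hR, (measure_mono hsub).trans_lt hμs⟩
  refine hballs.frequently (Eventually.frequently ?_)
  filter_upwards [eventually_eventually_nhdsWithin.2 (h x), Ioo_mem_nhdsGT hR] with r hr hrR
  rw [← withDensity_apply' g]
  refine measure_closedBall_le_mul_of_eventually_measure_ball_le_mul ⟨R, hrR.2, hfin.ne⟩ ?_
  filter_upwards [nhdsWithin_mono r (Ioi_subset_Ioi hrR.1.le) hr] with R' hR'
  rwa [withDensity_apply' g]

end Averages

theorem setLIntegral_inter_support {X : Type*} [MeasurableSpace X] {μ : Measure X} {s : Set X}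
    (hs : MeasurableSet s) (g : X → ℝ≥0∞) :
    ∫⁻ x in s ∩ g.support, g x ∂μ = ∫⁻ x in s, g x ∂μ := by
  rw [inter_comm, ← Measure.restrict_restrict' hs, setLIntegral_eq_of_support_subset subset_rfl]

theorem setLIntegral_le_mul_of_ae_le {X : Type*} [MeasurableSpace X] {μ : Measure X}
    {g : X → ℝ≥0∞} {c : ℝ≥0∞} (h : ∀ᵐ x ∂μ, g x ≤ c) (s : Set X) :
    ∫⁻ x in s, g x ∂μ ≤ c * μ s :=
  (lintegral_mono_ae (ae_restrict_of_ae h)).trans_eq (setLIntegral_const s c)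

theorem stmt12_general {X E : Type*} [PseudoMetricSpace X] [MeasurableSpace X] [BorelSpace X]
    [SeminormedAddGroup E] (μ : Measure X)
    (hball : ∀ (x : X) (r : ℝ), 0 < r → 0 < μ (ball x r) ∧ μ (ball x r) < ∞)
    (C : ℝ≥0) (hdoub : ∀ᶠ r in 𝓝[>] 0, ∀ x, μ (ball x (2 * r)) ≤ C * μ (ball x r))
    (f : X → E) (hf : AEStronglyMeasurable f μ) :
    (∃ K : ℝ, ∀ᵐ x ∂μ, ‖f x‖ ≤ K) ↔
    (∃ M : ℝ, 0 ≤ M ∧ ∀ (x : X) (r : ℝ), 0 < r → ∀ l : ℝ, 0 ≤ l →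
      ∫⁻ y in {y | y ∈ ball x r ∧ l < ‖f y‖}, ENNReal.ofReal ‖f y‖ ∂μ ≤
        ENNReal.ofReal (l + M) * μ {y | y ∈ ball x r ∧ l < ‖f y‖}) := by
  constructor
  · rintro ⟨K, hK⟩
    refine ⟨max K 0, le_max_right K 0, fun x r _ l hl ↦ setLIntegral_le_mul_of_ae_le ?_ _⟩
    filter_upwards [hK] with y hy
    exact ENNReal.ofReal_le_ofReal (by linarith [le_max_left K 0])
  · rintro ⟨M, hM, h⟩
    have := secondCountableTopology_of_measure_ball hball
    have := isLocallyFiniteMeasure_of_measure_ball_lt_top fun x r hr ↦ (hball x r hr).2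
    have := isUnifLocDoublingMeasure_of_eventually_measure_ball_le hdoub
    have hmean (x : X) (r : ℝ) (hr : 0 < r) :
        ∫⁻ y in ball x r, ENNReal.ofReal ‖f y‖ ∂μ ≤ ENNReal.ofReal M * μ (ball x r) := by
      have hsupp : {y | y ∈ ball x r ∧ 0 < ‖f y‖} =
          ball x r ∩ (fun y ↦ ENNReal.ofReal ‖f y‖).support := by
        ext y
        simp only [mem_ofPred_eq, mem_inter_iff, Function.mem_support, ne_eq,
          ENNReal.ofReal_eq_zero, not_le]
      have hzero := h x r hr 0 le_rfl
      rw [hsupp, setLIntegral_inter_support measurableSet_ball, zero_add] at hzero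
      exact hzero.trans (by gcongr; exact inter_subset_left)
    have hbound : ∀ᵐ x ∂μ, ENNReal.ofReal ‖f x‖ ≤ ENNReal.ofReal M :=
      ae_le_of_eventually_setLIntegral_ball_le_mul
        (continuous_norm.comp_aestronglyMeasurable hf).aemeasurable.ennreal_ofReal
        fun x ↦ eventually_mem_nhdsWithin.mono (hmean x)
    exact ⟨M, hbound.mono fun x hx ↦ (ENNReal.ofReal_le_ofReal_iff hM).1 hx⟩

end GeneralLemmas

/-- in a doubling metric measure space, a measurable `f` is essentially bounded
iff there is `M ≥ 0` with `∫_{{x ∈ B : |f| > λ}} |f| dμ ≤ (λ + M) μ({x ∈ B : |f| > λ})`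
for all balls `B` and all `λ ≥ 0`. -/
theorem stmt12 {X : Type*} [MetricSpace X] [MeasurableSpace X] [BorelSpace X]
    (μ : Measure X)
    (hball : ∀ (x : X) (r : ℝ), 0 < r → 0 < μ (ball x r) ∧ μ (ball x r) < ⊤)
    (C : ℝ≥0) (hC : 1 ≤ C)
    (hdoub : ∀ (x : X) (r : ℝ), 0 < r → μ (ball x (2 * r)) ≤ (C : ℝ≥0∞) * μ (ball x r))
    (f : X → ℝ) (hf : Measurable f) :
    (∃ K : ℝ, ∀ᵐ x ∂μ, |f x| ≤ K) ↔
    (∃ M : ℝ, 0 ≤ M ∧ ∀ (x : X) (r : ℝ), 0 < r → ∀ l : ℝ, 0 ≤ l →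
      ∫⁻ y in {y | y ∈ ball x r ∧ l < |f y|}, ENNReal.ofReal |f y| ∂μ ≤
        ENNReal.ofReal (l + M) * μ {y | y ∈ ball x r ∧ l < |f y|}) := by
  exact stmt12_general μ hball C
    (by filter_upwards [self_mem_nhdsWithin] with r hr x using hdoub x r hr) f
    hf.aestronglyMeasurable
end
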